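/- arXiv:2007.06896 — 7 statements merged into one kernel-verified Lean document; each statement's English description precedes it below -/
import Mathlib

section
/- Let D be a semicomplete digraph on n vertices and let ℓ, k ∈ ℕ. Suppose there exist q ≥ 1 and a sequence of triples (Y_0,Z_0,S_0), (Y_1,Z_1,S_1), …, (Y_q,Z_q,S_q), each of which is t_i-valid for some t_i ∈ {0,1,…,n}, such that (Y_0,Z_0,S_0) = (∅, V(D), ∅), (Y_q,Z_q,S_q) = (V(D), ∅, ∅), each consecutive pair ((Y_{i−1},Z_{i−1},S_{i−1}), (Y_i,Z_i,S_i)) is compatible, and the total weight Σ_{i=1}^{q} w((Y_{i−1},Z_{i−1},S_{i−1}),(Y_i,Z_i,S_i)) is at most k. Then there exists X ⊆ V(D) with |X| ≤ k and mco(D−X) ≤ ℓ. -/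
open Set

/-- A (loopless) digraph given by its arc relation `A` is *semicomplete* if between
any two distinct vertices there is at least one arc. -/
def Semicomplete {V : Type*} (A : V → V → Prop) : Prop :=
  Irreflexive A ∧ ∀ x y : V, x ≠ y → A x y ∨ A y x

/-- Reachability (by a directed path) inside the subdigraph induced on the vertex set `W`. -/
def DReach {V : Type*} (A : V → V → Prop) (W : Set V) : V → V → Prop :=
  Relation.ReflTransGen fun a b => a ∈ W ∧ b ∈ W ∧ A a b

/-- The vertex set of the strongly connected component of `v` in the
subdigraph induced on the vertex set `W`. -/
def dscc {V : Type*} (A : V → V → Prop) (W : Set V) (v : V) : Set V :=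
  {u | u ∈ W ∧ DReach A W v u ∧ DReach A W u v}

/-- `C` is the vertex set of a strongly connected component of the subdigraph induced on `W`. -/
def IsSccSet {V : Type*} (A : V → V → Prop) (W : Set V) (C : Set V) : Prop :=
  ∃ v ∈ W, C = dscc A W v

/-- `mco`: the maximum number of vertices in a strongly connected component of the
subdigraph induced on `W`. -/
noncomputable def mco {V : Type*} (A : V → V → Prop) (W : Set V) : ℕ :=
  sSup {n | ∃ v ∈ W, n = (dscc A W v).ncard}

/-- Out-degree of `v`. -/
noncomputable def outDeg {V : Type*} (A : V → V → Prop) (v : V) : ℕ := {u | A v u}.ncard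

/-- In-degree of `v`. -/
noncomputable def inDeg {V : Type*} (A : V → V → Prop) (v : V) : ℕ := {u | A u v}.ncard

/-- `S` covers all arcs from `Z` to `Y`. -/
def ArcCover {V : Type*} (A : V → V → Prop) (Y Z S : Set V) : Prop :=
  ∀ y ∈ Y, ∀ z ∈ Z, A z y → y ∈ S ∨ z ∈ S

/-- A triple `(Y,Z,S)` is `t`-valid (with respect to the digraph `A` and parameter `k`). -/
def TValid {V : Type*} [Fintype V] (A : V → V → Prop) (k t : ℕ) (Y Z S : Set V) : Prop :=
  Y ∪ Z = Set.univ ∧ Disjoint Y Z ∧ Y.ncard = t ∧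
  ArcCover A Y Z S ∧ (∀ S' ⊆ S, ArcCover A Y Z S' → S' = S) ∧
  S.ncard ≤ k ∧
  (∀ x ∈ S, Fintype.card V - t + k < outDeg A x → x ∈ Y) ∧
  (∀ x ∈ S, t + k < inDeg A x → x ∈ Z)

/-- The weight `w((Y1,Z1,S1),(Y2,Z2,S2)) = |S1 \ S2| + max (0, |(Z1 ∩ Y2) \ (S1 ∪ S2)| - ℓ)`. -/
noncomputable def wt {V : Type*} (ℓ : ℕ) (Z1 S1 Y2 S2 : Set V) : ℕ :=
  (S1 \ S2).ncard + (((Z1 ∩ Y2) \ (S1 ∪ S2)).ncard - ℓ)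

/-- Compatibility of a pair of valid triples. -/
def Compat {V : Type*} (ℓ k : ℕ) (Y1 Z1 S1 Y2 Z2 S2 : Set V) : Prop :=
  Y1 ⊂ Y2 ∧ (∀ x ∈ S1 ∩ Z1, x ∈ Z2 → x ∈ S2) ∧ (Y1 \ S1 ⊆ Y2 \ S2) ∧
  wt ℓ Z1 S1 Y2 S2 ≤ k

/-- If no arc of the subdigraph induced on `W` leads from `Z` to `Y`, then no directed path
leaves `Z`. -/
lemma DReach.mem_of_arcCover {V : Type*} {A : V → V → Prop} {W Y Z S : Set V}
    (hYZ : Y ∪ Z = Set.univ) (hS : ArcCover A Y Z S) (hW : Disjoint W S) {a b : V}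
    (hab : DReach A W a b) (ha : a ∈ Z) : b ∈ Z := by
  induction hab with
  | refl => exact ha
  | @tail c d _ hcd ih =>
    have hd : d ∈ Y ∪ Z := hYZ ▸ Set.mem_univ d
    refine hd.resolve_left fun hdY => ?_
    rcases hS d hdY c ih hcd.2.2 with h | h
    · exact Set.disjoint_left.mp hW hcd.2.1 h
    · exact Set.disjoint_left.mp hW hcd.1 h

/-- A strongly connected component meeting `Z₁ ∩ Y₂` is contained in it when no arc of the
induced subdigraph leads backwards across either partition. -/
lemma dscc_subset_inter {V : Type*} {A : V → V → Prop} {W Y₁ Z₁ S₁ Y₂ Z₂ S₂ : Set V}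
    (h₁ : Y₁ ∪ Z₁ = Set.univ) (hS₁ : ArcCover A Y₁ Z₁ S₁) (hW₁ : Disjoint W S₁)
    (h₂ : Y₂ ∪ Z₂ = Set.univ) (hd₂ : Disjoint Y₂ Z₂) (hS₂ : ArcCover A Y₂ Z₂ S₂)
    (hW₂ : Disjoint W S₂) {v : V} (hv₁ : v ∈ Z₁) (hv₂ : v ∈ Y₂) :
    dscc A W v ⊆ Z₁ ∩ Y₂ := by
  rintro u ⟨-, hvu, huv⟩
  refine ⟨hvu.mem_of_arcCover h₁ hS₁ hW₁ hv₁, ?_⟩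
  have hu : u ∈ Y₂ ∪ Z₂ := h₂ ▸ Set.mem_univ u
  exact hu.resolve_right fun huZ =>
    Set.disjoint_left.mp hd₂ hv₂ (huv.mem_of_arcCover h₂ hS₂ hW₂ huZ)

/-- A finite set can be reduced to at most `ℓ` elements by deleting `|B| - ℓ` of them. -/
lemma exists_ncard_eq_sub_and_ncard_diff_le {V : Type*} [Finite V] (B : Set V) (ℓ : ℕ) :
    ∃ T : Set V, T.ncard = B.ncard - ℓ ∧ (B \ T).ncard ≤ ℓ := by
  obtain ⟨T, hTB, hT⟩ := Set.exists_subset_card_eq (Nat.sub_le B.ncard ℓ)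
  refine ⟨T, hT, ?_⟩
  rw [Set.ncard_sdiff hTB]
  omega

/-- A sequence of sets ending in the empty set is covered by its consecutive differences. -/
lemma subset_biUnion_sdiff_succ {V : Type*} {q : ℕ} {S : ℕ → Set V} (hq : S q = ∅) {i : ℕ}
    (hi : i ≤ q) : S i ⊆ ⋃ j ∈ Finset.range q, S j \ S (j + 1) := by
  induction hi using Nat.decreasingInduction with
  | self => simp [hq]
  | of_succ j hj ih =>
    intro x hx
    by_cases hx' : x ∈ S (j + 1)
    · exact ih hx'
    · exact Set.mem_biUnion (Finset.mem_coe.mpr (Finset.mem_range.mpr hj)) ⟨hx, hx'⟩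

/-- if there is a sequence of valid triples from `(∅, V, ∅)` to `(V, ∅, ∅)`
whose consecutive pairs are compatible and whose total weight is at most `k`, then there is
a set `X` of at most `k` vertices with `mco(D - X) ≤ ℓ`. -/
theorem statement_1 {V : Type*} [Fintype V] (A : V → V → Prop)
    (hA : Semicomplete A) (ℓ k : ℕ)
    (hseq : ∃ q ≥ 1, ∃ Y Z S : ℕ → Set V,
      (∀ i ≤ q, ∃ t ≤ Fintype.card V, TValid A k t (Y i) (Z i) (S i)) ∧
      Y 0 = ∅ ∧ Z 0 = Set.univ ∧ S 0 = ∅ ∧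
      Y q = Set.univ ∧ Z q = ∅ ∧ S q = ∅ ∧
      (∀ i < q, Compat ℓ k (Y i) (Z i) (S i) (Y (i + 1)) (Z (i + 1)) (S (i + 1))) ∧
      (∑ i ∈ Finset.range q, wt ℓ (Z i) (S i) (Y (i + 1)) (S (i + 1))) ≤ k) :
    ∃ X : Set V, X.ncard ≤ k ∧ mco A (Set.univ \ X) ≤ ℓ := by
  obtain ⟨q, -, Y, Z, S, hval, hY0, -, -, hYq, -, hSq, -, hsum⟩ := hseq
  choose T hT hTle using fun i => exists_ncard_eq_sub_and_ncard_diff_le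
    ((Z i ∩ Y (i + 1)) \ (S i ∪ S (i + 1))) ℓ
  set X : Set V := ⋃ i ∈ Finset.range q, (S i \ S (i + 1)) ∪ T i
  have hSX : ∀ i ≤ q, S i ⊆ X := fun i hi =>
    (subset_biUnion_sdiff_succ hSq hi).trans
      (Set.iUnion₂_mono fun _ _ => Set.subset_union_left)
  have hdisj : ∀ i ≤ q, Disjoint (Set.univ \ X) (S i) := fun i hi =>
    Set.disjoint_sdiff_left.mono_right (hSX i hi)
  refine ⟨X, ?_, csSup_le' ?_⟩
  · refine le_trans ?_ hsum
    refine (Finset.set_ncard_biUnion_le _ _).trans (Finset.sum_le_sum fun i _ => ?_)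
    exact (Set.ncard_union_le _ _).trans (by rw [hT, wt])
  · rintro _ ⟨v, -, rfl⟩
    obtain ⟨i, hiq, hvi, hvi'⟩ : ∃ i < q, v ∉ Y i ∧ v ∈ Y (i + 1) := by
      by_contra! h
      have hnot : ∀ i ≤ q, v ∉ Y i := by
        intro i
        induction i with
        | zero => simp [hY0]
        | succ i ih => exact fun hi => h i hi (ih (Nat.le_of_succ_le hi))
      exact hnot q le_rfl (hYq ▸ Set.mem_univ v)
    obtain ⟨_, -, h₁, -, -, hS₁, -⟩ := hval i hiq.le
    obtain ⟨_, -, h₂, hd₂, -, hS₂, -⟩ := hval (i + 1) hiq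
    have hvZ : v ∈ Z i := (h₁ ▸ Set.mem_univ v : v ∈ Y i ∪ Z i).resolve_left hvi
    have hsub := dscc_subset_inter h₁ hS₁ (hdisj i hiq.le) h₂ hd₂ hS₂ (hdisj (i + 1) hiq)
      hvZ hvi'
    refine (Set.ncard_le_ncard fun u hu => ?_).trans (hTle i)
    have huX : u ∉ X := hu.1.2
    refine ⟨⟨hsub hu, ?_⟩, fun huT => huX ?_⟩
    · rintro (h | h)
      exacts [huX (hSX i hiq.le h), huX (hSX (i + 1) hiq h)]
    · exact Set.mem_biUnion (Finset.mem_coe.mpr (Finset.mem_range.mpr hiq)) (Or.inr huT)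
end

section
/- Let D be a digraph on n vertices, let k ∈ ℕ, and let (Y,Z,S) be a t-valid triple for some t. Then every vertex v of D with d⁺_D(v) > n−t+k lies in Y, and every vertex v of D with d⁻_D(v) > t+k lies in Z. -/
open Set

/-- in any `t`-valid triple `(Y,Z,S)`, every vertex of out-degree greater than
`n - t + k` lies in `Y` and every vertex of in-degree greater than `t + k` lies in `Z`. -/
theorem statement_5 {V : Type*} [Fintype V] (A : V → V → Prop) (k t : ℕ)
    (Y Z S : Set V) (h : TValid A k t Y Z S) :
    (∀ v : V, Fintype.card V - t + k < outDeg A v → v ∈ Y) ∧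
    (∀ v : V, t + k < inDeg A v → v ∈ Z) := by
  obtain ⟨hYZ, hdisj, hYt, hcover, -, hSk, hout, hin⟩ := h
  have hYZ' (v : V) : v ∈ Y ∨ v ∈ Z := by simpa [← hYZ] using Set.mem_univ v
  have hcard : Y.ncard + Z.ncard = Fintype.card V := by
    rw [← Set.ncard_union_eq hdisj, hYZ, Set.ncard_univ, Nat.card_eq_fintype_card]
  refine ⟨fun v hv => ?_, fun v hv => ?_⟩
  · by_contra hvY
    have hvS : v ∉ S := fun hvS => hvY (hout v hvS hv)
    have hsub : {u | A v u} ⊆ Z ∪ S := fun u hu =>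
      (hYZ' u).elim
        (fun huY => .inr ((hcover u huY v ((hYZ' v).resolve_left hvY) hu).resolve_right hvS)) .inl
    have hdeg : outDeg A v ≤ Z.ncard + S.ncard :=
      (Set.ncard_le_ncard hsub).trans (Set.ncard_union_le Z S)
    omega
  · by_contra hvZ
    have hvS : v ∉ S := fun hvS => hvZ (hin v hvS hv)
    have hsub : {u | A u v} ⊆ Y ∪ S := fun u hu =>
      (hYZ' u).elim .inl
        (fun huZ => .inr ((hcover v ((hYZ' v).resolve_right hvZ) u huZ hu).resolve_left hvS))
    have hdeg : inDeg A v ≤ Y.ncard + S.ncard :=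
      (Set.ncard_le_ncard hsub).trans (Set.ncard_union_le Y S)
    omega
end

section
/- Let D=(V,A) be a semicomplete digraph on n vertices, let k ∈ ℕ, and let t ∈ [n]. If there exists a t-valid triple, then there are at most 7k+2 vertices v ∈ V with d⁺_D(v) ≤ n−t+k and d⁻_D(v) ≤ t+k. -/
open Set

/-- The converse of a semicomplete digraph is semicomplete. -/
theorem Semicomplete.flip {V : Type*} {A : V → V → Prop} (hA : Semicomplete A) :
    Semicomplete (flip A) :=
  ⟨fun x h => hA.1 x h, fun x y hxy => (hA.2 x y hxy).symm⟩

open Classical in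
/-- Some vertex of a nonempty set `P` in a semicomplete digraph has at least `(|P| - 1) / 2`
out-neighbours in `P`. -/
theorem Semicomplete.exists_card_le_two_mul_out {V : Type*} {A : V → V → Prop}
    (hA : Semicomplete A) {P : Finset V} (hP : P.Nonempty) :
    ∃ v ∈ P, P.card ≤ 2 * (P.filter (A v)).card + 1 := by
  by_contra! hcon
  have hdeg : ∀ v ∈ P, P.card ≤ (P.filter (A v)).card + (P.filter (A · v)).card + 1 := by
    intro v _
    have hsub : P ⊆ insert v (P.filter (A v) ∪ P.filter (A · v)) := by
      intro u hu
      by_cases huv : u = v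
      · simp [huv]
      · simpa [hu, huv] using (hA.2 u v huv).symm
    have h₁ := Finset.card_le_card hsub
    have h₂ := Finset.card_insert_le v (P.filter (A v) ∪ P.filter (A · v))
    have h₃ := Finset.card_union_le (P.filter (A v)) (P.filter (A · v))
    omega
  have hcount : ∑ v ∈ P, (P.filter (A v)).card = ∑ v ∈ P, (P.filter (A · v)).card :=
    Finset.sum_card_bipartiteAbove_eq_sum_card_bipartiteBelow A
  have hlt : ∑ v ∈ P, (2 * (P.filter (A v)).card + 1) < ∑ v ∈ P, P.card :=
    Finset.sum_lt_sum_of_nonempty hP hcon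
  have hle := Finset.sum_le_sum hdeg
  simp only [Finset.sum_add_distrib, ← Finset.mul_sum] at hlt hle
  omega

/-- If every vertex of `P` dominates the disjoint set `W` and has out-degree at most `d`, then
`|P|` is bounded in terms of `d - |W|`. -/
theorem Semicomplete.ncard_le_of_outDeg_le {V : Type*} [Fintype V] {A : V → V → Prop}
    (hA : Semicomplete A) {P W : Set V} (hPW : Disjoint P W) {d : ℕ}
    (hdom : ∀ v ∈ P, ∀ w ∈ W, A v w) (hd : ∀ v ∈ P, outDeg A v ≤ d) :
    P.ncard ≤ 2 * (d - W.ncard) + 1 := by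
  classical
  rcases P.eq_empty_or_nonempty with rfl | hne
  · simp
  obtain ⟨v, hvP, hv⟩ := hA.exists_card_le_two_mul_out (P := P.toFinset) (by simpa using hne)
  rw [Set.mem_toFinset] at hvP
  rw [← Set.ncard_eq_toFinset_card'] at hv
  have hcoe : (P.toFinset.filter (A v)).card = (P ∩ {u | A v u}).ncard := by
    rw [← Set.ncard_coe_finset]
    congr 1
    ext u
    simp
  have hdisj : Disjoint (P ∩ {u | A v u}) W := hPW.mono_left Set.inter_subset_left
  have hsub : (P ∩ {u | A v u}) ∪ W ⊆ {u | A v u} :=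
    Set.union_subset Set.inter_subset_right (hdom v hvP)
  have hcard := Set.ncard_le_ncard hsub
  rw [Set.ncard_union_eq hdisj] at hcard
  have hdv : {u | A v u}.ncard ≤ d := hd v hvP
  omega

/-- if a `t`-valid triple exists (`1 ≤ t ≤ n`), then at most `7k + 2` vertices
have out-degree at most `n - t + k` and in-degree at most `t + k`. -/
theorem statement_6 {V : Type*} [Fintype V] (A : V → V → Prop) (hA : Semicomplete A)
    (k t : ℕ) (ht1 : 1 ≤ t) (ht2 : t ≤ Fintype.card V)
    (hex : ∃ Y Z S : Set V, TValid A k t Y Z S) :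
    {v : V | outDeg A v ≤ Fintype.card V - t + k ∧ inDeg A v ≤ t + k}.ncard ≤ 7 * k + 2 := by
  obtain ⟨Y, Z, S, hunion, hdisj, hY, hcov, -, hS, -, -⟩ := hex
  set M := {v : V | outDeg A v ≤ Fintype.card V - t + k ∧ inDeg A v ≤ t + k}
  have hYZ : Y.ncard + Z.ncard = Fintype.card V := by
    rw [← Set.ncard_union_eq hdisj, hunion, Set.ncard_univ, Nat.card_eq_fintype_card]
  have harc : ∀ y ∈ Y \ S, ∀ z ∈ Z \ S, A y z := by
    intro y hy z hz
    refine (hA.2 y z (hdisj.ne_of_mem hy.1 hz.1)).resolve_right fun h => ?_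
    exact (hcov y hy.1 z hz.1 h).elim hy.2 hz.2
  have hdisjS : Disjoint (Y \ S) (Z \ S) := hdisj.mono Set.sdiff_subset Set.sdiff_subset
  have hP : (M ∩ (Y \ S)).ncard ≤ 2 * (Fintype.card V - t + k - (Z \ S).ncard) + 1 :=
    hA.ncard_le_of_outDeg_le (hdisjS.mono_left Set.inter_subset_right)
      (fun y hy => harc y hy.2) fun y hy => hy.1.1
  have hQ : (M ∩ (Z \ S)).ncard ≤ 2 * (t + k - (Y \ S).ncard) + 1 :=
    hA.flip.ncard_le_of_outDeg_le (hdisjS.symm.mono_left Set.inter_subset_right)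
      (fun z hz y hy => harc y hy z hz.2) fun z hz => hz.1.2
  have hYS := Set.ncard_inter_add_ncard_sdiff_eq_ncard Y S
  have hZS := Set.ncard_inter_add_ncard_sdiff_eq_ncard Z S
  have hSsplit : (Y ∩ S).ncard + (Z ∩ S).ncard = S.ncard := by
    rw [← Set.ncard_union_eq (hdisj.mono Set.inter_subset_left Set.inter_subset_left),
      ← Set.union_inter_distrib_right, hunion, Set.univ_inter]
  have hM : M ⊆ S ∪ (M ∩ (Y \ S) ∪ M ∩ (Z \ S)) := by
    intro v hv
    have hvYZ : v ∈ Y ∪ Z := hunion ▸ Set.mem_univ v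
    by_cases hvS : v ∈ S
    · exact Or.inl hvS
    · exact Or.inr (hvYZ.imp (fun h => ⟨hv, h, hvS⟩) fun h => ⟨hv, h, hvS⟩)
  have h₁ := Set.ncard_le_ncard hM
  have h₂ := Set.ncard_union_le S (M ∩ (Y \ S) ∪ M ∩ (Z \ S))
  have h₃ := Set.ncard_union_le (M ∩ (Y \ S)) (M ∩ (Z \ S))
  omega
end

section
/- Let D be a digraph on n vertices, let k ∈ ℕ, let t ∈ [n], and let F = {v ∈ V(D) : d⁺_D(v) ≤ n−t+k and d⁻_D(v) ≤ t+k}. If (Y,Z,S) and (Y',Z',S') are both t-valid triples and Y ∩ F = Y' ∩ F, then Y = Y' and Z = Z'. -/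
open Set

/-- In a `t`-valid triple, every vertex of out-degree more than `n - t + k` lies in `Y`. -/
theorem TValid.mem_left_of_lt_outDeg {V : Type*} [Fintype V] {A : V → V → Prop} {k t : ℕ}
    {Y Z S : Set V} (h : TValid A k t Y Z S) {x : V}
    (hx : Fintype.card V - t + k < outDeg A x) : x ∈ Y := by
  obtain ⟨hU, hD, hY, hC, -, hS, hout, -⟩ := h
  by_contra hxY
  have hxZ : x ∈ Z := (hU.ge (mem_univ x)).resolve_left hxY
  have hxS : x ∉ S := fun hxS => hxY (hout x hxS hx)
  have hsub : {u | A x u} ⊆ Z ∪ S := fun u hu =>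
    (hU.ge (mem_univ u)).elim (fun huY => .inr ((hC u huY x hxZ hu).resolve_right hxS)) .inl
  have hcard : Y.ncard + Z.ncard = Fintype.card V := by
    rw [← ncard_union_eq hD, hU, ncard_univ, Nat.card_eq_fintype_card]
  have hle := (ncard_le_ncard hsub).trans (ncard_union_le Z S)
  unfold outDeg at hx
  omega

/-- In a `t`-valid triple, every vertex of in-degree more than `t + k` lies in `Z`. -/
theorem TValid.mem_right_of_lt_inDeg {V : Type*} [Fintype V] {A : V → V → Prop} {k t : ℕ}
    {Y Z S : Set V} (h : TValid A k t Y Z S) {x : V}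
    (hx : t + k < inDeg A x) : x ∈ Z := by
  obtain ⟨hU, -, hY, hC, -, hS, -, hin⟩ := h
  by_contra hxZ
  have hxY : x ∈ Y := (hU.ge (mem_univ x)).resolve_right hxZ
  have hxS : x ∉ S := fun hxS => hxZ (hin x hxS hx)
  have hsub : {u | A u x} ⊆ Y ∪ S := fun u hu =>
    (hU.ge (mem_univ u)).elim .inl (fun huZ => .inr ((hC x hxY u huZ hu).resolve_left hxS))
  have hle := (ncard_le_ncard hsub).trans (ncard_union_le Y S)
  unfold inDeg at hx
  omega

/-- The `Z`-part of a `t`-valid triple is the complement of its `Y`-part. -/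
theorem TValid.compl_left_eq {V : Type*} [Fintype V] {A : V → V → Prop} {k t : ℕ}
    {Y Z S : Set V} (h : TValid A k t Y Z S) : Yᶜ = Z :=
  IsCompl.compl_eq ⟨h.2.1, codisjoint_iff.2 h.1⟩

/-- two `t`-valid triples whose `Y`-parts agree on the set `F` of vertices of
out-degree at most `n - t + k` and in-degree at most `t + k` have equal `Y`-parts and equal
`Z`-parts. -/
theorem statement_8 {V : Type*} [Fintype V] (A : V → V → Prop)
    (k t : ℕ) (ht1 : 1 ≤ t) (ht2 : t ≤ Fintype.card V)
    (Y Z S Y' Z' S' : Set V)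
    (h : TValid A k t Y Z S) (h' : TValid A k t Y' Z' S')
    (hF : Y ∩ {v : V | outDeg A v ≤ Fintype.card V - t + k ∧ inDeg A v ≤ t + k} =
          Y' ∩ {v : V | outDeg A v ≤ Fintype.card V - t + k ∧ inDeg A v ≤ t + k}) :
    Y = Y' ∧ Z = Z' := by
  have hYY : Y = Y' := by
    ext x
    by_cases hout : outDeg A x ≤ Fintype.card V - t + k
    · by_cases hin : inDeg A x ≤ t + k
      · simpa [hout, hin] using Set.ext_iff.1 hF x
      · rw [not_le] at hin
        exact iff_of_false (h.2.1.notMem_of_mem_right (h.mem_right_of_lt_inDeg hin))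
          (h'.2.1.notMem_of_mem_right (h'.mem_right_of_lt_inDeg hin))
    · rw [not_le] at hout
      exact iff_of_true (h.mem_left_of_lt_outDeg hout) (h'.mem_left_of_lt_outDeg hout)
  exact ⟨hYY, by rw [← h.compl_left_eq, ← h'.compl_left_eq, hYY]⟩
end

section
/- For every k ∈ ℕ, every finite undirected graph G has at most 2^k inclusion-minimal vertex covers of size at most k. -/
/-- `S` is a vertex cover of the (undirected) graph `G`. -/
def IsVCover {V : Type*} (G : SimpleGraph V) (S : Set V) : Prop :=
  ∀ ⦃a b : V⦄, G.Adj a b → a ∈ S ∨ b ∈ S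

/-- Branching bound: at most `2 ^ j` minimal vertex covers extend `T` by at most `j` vertices. -/
theorem ncard_minimal_vcover_superset_le {V : Type*} [Finite V] (G : SimpleGraph V) (j : ℕ)
    (T : Set V) :
    {S : Set V | (IsVCover G S ∧ ∀ S' ⊂ S, ¬ IsVCover G S') ∧ T ⊆ S ∧
      S.ncard ≤ T.ncard + j}.ncard ≤ 2 ^ j := by
  induction j generalizing T with
  | zero =>
    refine (Set.ncard_le_ncard (t := {T}) ?_).trans (by simp)
    rintro S ⟨-, hTS, hcard⟩
    exact (Set.eq_of_subset_of_ncard_le hTS hcard).symm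
  | succ j ih =>
    by_cases hT : IsVCover G T
    · refine (Set.ncard_le_ncard (t := {T}) ?_).trans (by simp [Nat.one_le_two_pow])
      rintro S ⟨⟨-, hmin⟩, hTS, -⟩
      by_contra hne
      exact hmin T (hTS.ssubset_of_ne (Ne.symm hne)) hT
    · obtain ⟨a, b, hab, ha, hb⟩ : ∃ a b, G.Adj a b ∧ a ∉ T ∧ b ∉ T := by
        simpa [IsVCover] using hT
      rw [pow_succ, mul_two]
      refine (Set.ncard_le_ncard ?_).trans
        ((Set.ncard_union_le _ _).trans (add_le_add (ih (insert a T)) (ih (insert b T))))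
      rintro S ⟨hS, hTS, hcard⟩
      rcases hS.1 hab with h | h
      · refine Or.inl ⟨hS, Set.insert_subset h hTS, ?_⟩
        rw [Set.ncard_insert_of_notMem ha]
        omega
      · refine Or.inr ⟨hS, Set.insert_subset h hTS, ?_⟩
        rw [Set.ncard_insert_of_notMem hb]
        omega

/-- every finite undirected graph has at most `2 ^ k` inclusion-minimal vertex
covers of size at most `k`. -/
theorem statement_10 {V : Type*} [Fintype V] (G : SimpleGraph V) (k : ℕ) :
    {S : Set V | (IsVCover G S ∧ ∀ S' ⊂ S, ¬ IsVCover G S') ∧ S.ncard ≤ k}.ncard ≤ 2 ^ k := by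
  simpa using ncard_minimal_vcover_superset_le G k ∅
end

section
/- Let T_1 and T_2 be strongly connected tournaments on disjoint vertex sets with |V(T_1)| + |V(T_2)| ≥ 3, and let D be the tournament on V(T_1) ∪ V(T_2) whose arc set consists of all arcs of T_1 and T_2 together with the arc uv for every u ∈ V(T_1) and v ∈ V(T_2). Then for every x ∈ V(T_1) and y ∈ V(T_2), the tournament obtained from D by replacing the arc xy with the arc yx is strongly connected. -/
open Set

/-- let `T1`, `T2` be strongly connected tournaments on disjoint vertex sets
`V1`, `V2` with `|V1| + |V2| ≥ 3`, and let `D` be the tournament on `V1 ∪ V2` consisting of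
`T1`, `T2` and all arcs from `V1` to `V2`. Reversing any single arc `xy` with `x ∈ V1`,
`y ∈ V2` yields a strongly connected tournament. -/
theorem statement_17 {V : Type*} [Fintype V] (V1 V2 : Set V) (hdisj : Disjoint V1 V2)
    (T1 T2 : V → V → Prop)
    (hT1supp : ∀ u v : V, T1 u v → u ∈ V1 ∧ v ∈ V1)
    (hT2supp : ∀ u v : V, T2 u v → u ∈ V2 ∧ v ∈ V2)
    (hT1irr : Irreflexive T1) (hT2irr : Irreflexive T2)
    (hT1tour : ∀ u ∈ V1, ∀ v ∈ V1, u ≠ v → (T1 u v ↔ ¬ T1 v u))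
    (hT2tour : ∀ u ∈ V2, ∀ v ∈ V2, u ≠ v → (T2 u v ↔ ¬ T2 v u))
    (hT1strong : ∀ u ∈ V1, ∀ v ∈ V1, DReach T1 V1 u v)
    (hT2strong : ∀ u ∈ V2, ∀ v ∈ V2, DReach T2 V2 u v)
    (hcard : 3 ≤ V1.ncard + V2.ncard)
    (x : V) (hx : x ∈ V1) (y : V) (hy : y ∈ V2) :
    ∀ u ∈ V1 ∪ V2, ∀ v ∈ V1 ∪ V2,
      DReach
        (fun a b =>
          ((T1 a b ∨ T2 a b ∨ (a ∈ V1 ∧ b ∈ V2)) ∧ ¬(a = x ∧ b = y)) ∨ (a = y ∧ b = x))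
        (V1 ∪ V2) u v := by
  have hne : ∀ {a}, a ∈ V1 → a ∉ V2 := fun h1 h2 => Set.disjoint_left.mp hdisj h1 h2
  have hcross : ∃ a ∈ V1, ∃ b ∈ V2, ¬(a = x ∧ b = y) := by
    by_contra! h
    have h1 : V1 ⊆ {x} := fun a ha => (h a ha y hy).1
    have h2 : V2 ⊆ {y} := fun b hb => (h x hx b hb).2
    have c1 := Set.ncard_le_ncard h1
    have c2 := Set.ncard_le_ncard h2
    rw [Set.ncard_singleton] at c1 c2
    omega
  obtain ⟨a, ha, b, hb, hab⟩ := hcross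
  set R : V → V → Prop := fun a b =>
    ((T1 a b ∨ T2 a b ∨ (a ∈ V1 ∧ b ∈ V2)) ∧ ¬(a = x ∧ b = y)) ∨ (a = y ∧ b = x)
  have reach1 : ∀ u ∈ V1, ∀ v ∈ V1, DReach R (V1 ∪ V2) u v := fun u hu v hv =>
    Relation.ReflTransGen.mono (fun c d ⟨hc, hd, hcd⟩ =>
      ⟨Or.inl hc, Or.inl hd, Or.inl ⟨Or.inl hcd, fun h => hne hd (h.2 ▸ hy)⟩⟩)
      u v (hT1strong u hu v hv)
  have reach2 : ∀ u ∈ V2, ∀ v ∈ V2, DReach R (V1 ∪ V2) u v := fun u hu v hv =>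
    Relation.ReflTransGen.mono (fun c d ⟨hc, hd, hcd⟩ =>
      ⟨Or.inr hc, Or.inr hd, Or.inl ⟨Or.inr (Or.inl hcd), fun h => hne hx (h.1 ▸ hc)⟩⟩)
      u v (hT2strong u hu v hv)
  have reach_ab : DReach R (V1 ∪ V2) a b :=
    Relation.ReflTransGen.single
      ⟨Or.inl ha, Or.inr hb, Or.inl ⟨Or.inr (Or.inr ⟨ha, hb⟩), hab⟩⟩
  have reach_yx : DReach R (V1 ∪ V2) y x :=
    Relation.ReflTransGen.single ⟨Or.inr hy, Or.inl hx, Or.inr ⟨rfl, rfl⟩⟩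
  rintro u (hu | hu) v (hv | hv)
  · exact reach1 u hu v hv
  · exact ((reach1 u hu a ha).trans reach_ab).trans (reach2 b hb v hv)
  · exact ((reach2 u hu y hy).trans reach_yx).trans (reach1 x hx v hv)
  · exact reach2 u hu v hv
end

section
/- Let q ≥ 2 and let H^1, …, H^q be strongly connected tournaments on pairwise disjoint vertex sets, each with at least 3 vertices. Let D be the tournament whose vertex set is the union of the V(H^m) and whose arc set consists of all arcs of the H^m together with the arc uv for every u ∈ V(H^i), v ∈ V(H^j) with i < j. Let i < j, u ∈ V(H^i), v ∈ V(H^j), and let D' be the tournament obtained from D by replacing the arc uv with the arc vu. Then all vertices of V(H^i) ∪ V(H^{i+1}) ∪ ⋯ ∪ V(H^j) lie in a single strongly connected component of D'. -/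
open Set

/-- let `H^1, …, H^q` (`q ≥ 2`) be strongly connected tournaments on pairwise
disjoint vertex sets, each with at least `3` vertices, and let `D` consist of the `H^m`
together with all arcs from `H^m` to `H^{m'}` for `m < m'`. If `D'` is obtained from `D` by
reversing an arc `uv` with `u ∈ V(H^i)`, `v ∈ V(H^j)`, `i < j`, then all vertices of
`V(H^i) ∪ ⋯ ∪ V(H^j)` lie in a single strong component of `D'`. -/
theorem statement_18 {V : Type*} [Fintype V] (q : ℕ) (hq : 2 ≤ q)
    (W : Fin q → Set V) (hdisj : ∀ m m' : Fin q, m ≠ m' → Disjoint (W m) (W m'))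
    (H : Fin q → V → V → Prop)
    (hsupp : ∀ m : Fin q, ∀ u v : V, H m u v → u ∈ W m ∧ v ∈ W m)
    (hirr : ∀ m : Fin q, Irreflexive (H m))
    (htour : ∀ m : Fin q, ∀ u ∈ W m, ∀ v ∈ W m, u ≠ v → (H m u v ↔ ¬ H m v u))
    (hstrong : ∀ m : Fin q, ∀ u ∈ W m, ∀ v ∈ W m, DReach (H m) (W m) u v)
    (hsize : ∀ m : Fin q, 3 ≤ (W m).ncard)
    (i j : Fin q) (hij : i < j) (u : V) (hu : u ∈ W i) (v : V) (hv : v ∈ W j) :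
    ∃ C : Set V,
      IsSccSet
        (fun a b =>
          (((∃ m, H m a b) ∨ ∃ m m' : Fin q, m < m' ∧ a ∈ W m ∧ b ∈ W m') ∧
            ¬(a = u ∧ b = v)) ∨ (a = v ∧ b = u))
        (⋃ m, W m) C ∧
      (⋃ (m : Fin q) (_ : i ≤ m) (_ : m ≤ j), W m) ⊆ C := by
  set A : V → V → Prop := fun a b =>
    (((∃ m, H m a b) ∨ ∃ m m' : Fin q, m < m' ∧ a ∈ W m ∧ b ∈ W m') ∧
      ¬(a = u ∧ b = v)) ∨ (a = v ∧ b = u)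
  have mem_union {m : Fin q} {x : V} (hx : x ∈ W m) : x ∈ ⋃ m, W m := mem_iUnion_of_mem m hx
  have reach_within (m : Fin q) (x : V) (hx : x ∈ W m) (y : V) (hy : y ∈ W m) :
      DReach A (⋃ m, W m) x y := by
    refine Relation.ReflTransGen.mono ?_ x y (hstrong m x hx y hy)
    rintro a b ⟨ha, hb, hab⟩
    refine ⟨mem_union ha, mem_union hb, Or.inl ⟨Or.inl ⟨m, hab⟩, ?_⟩⟩
    rintro ⟨rfl, rfl⟩
    have him : i = m := by
      by_contra hne
      exact disjoint_left.mp (hdisj i m hne) hu ha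
    have hjm : j = m := by
      by_contra hne
      exact disjoint_left.mp (hdisj j m hne) hv hb
    exact hij.ne (him.trans hjm.symm)
  have reach_forward (m m' : Fin q) (hmm : m ≤ m') (x : V) (hx : x ∈ W m)
      (y : V) (hy : y ∈ W m') : DReach A (⋃ m, W m) x y := by
    rcases hmm.eq_or_lt with rfl | hlt
    · exact reach_within m x hx y hy
    · obtain ⟨w, hw, hwu⟩ : ∃ w ∈ W m, w ≠ u :=
        exists_ne_of_one_lt_ncard (by have := hsize m; omega) u
      exact (reach_within m x hx w hw).tail ⟨mem_union hw, mem_union hy,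
        Or.inl ⟨Or.inr ⟨m, m', hlt, hw, hy⟩, fun h => hwu h.1⟩⟩
  have reach_back : DReach A (⋃ m, W m) v u :=
    Relation.ReflTransGen.single ⟨mem_union hv, mem_union hu, Or.inr ⟨rfl, rfl⟩⟩
  refine ⟨_, ⟨u, mem_union hu, rfl⟩, fun x hx => ?_⟩
  simp only [mem_iUnion] at hx
  obtain ⟨m, him, hmj, hx⟩ := hx
  exact ⟨mem_union hx, reach_forward i m him u hu x hx,
    (reach_forward m j hmj x hx v hv).trans reach_back⟩
end
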